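/- Let P be a non-trivial Q1-like k×k pattern (exactly one 1-entry in each of the first row, last row, first column, last column; no empty rows or columns; the four outer 1-entries at positions (1,a), (s,1), (t,k), (k,b) satisfy b < a, i.e., they form an occurrence of Q1, where Q1 has 1-entries at (1,3),(2,1),(3,4),(4,2)). Then the matrix W(P) (as defined from two overlapping shifted copies of P) avoids P. -/

import Mathlib

/-!
Write `d = t - s`. By non-triviality, row `s` of `P` has its only 1-entry in the first column and
row `t` has its only 1-entry in the last column. The left copy in `W(P)` lacks its last column and
the right copy, shifted down by `d`, lacks its first column, so row `t = s + d` of `W(P)` is empty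
(`WP_row_eq_false`). An occurrence `(r, c)` of `P` therefore never uses row `t`, since every row
of `P` has a 1-entry.

The matrix has only `d` more rows than `P`, so the strictly increasing `r` satisfies
`i ≤ r i ≤ i + d`. If column `a` went to the right copy, the top 1-entry would force `r 0 ≥ d`,
hence `r i = i + d` for all `i`, and `r s = t`. If column `b` went to the left copy, the bottom
1-entry would force `r (k - 1) ≤ k - 1`, hence `r i = i` for all `i`, and `r t = t`. So column `a`
goes to the left copy and column `b` to the right copy, contradicting `b < a`.
-/


/-- A 0-1 matrix `M` contains a pattern `P` if there are strictly increasing row and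
column index maps embedding the 1-entries of `P` into 1-entries of `M`. -/
def Contains {m n k l : ℕ} (M : Fin m → Fin n → Bool) (P : Fin k → Fin l → Bool) : Prop :=
  ∃ r : Fin k → Fin m, ∃ c : Fin l → Fin n, StrictMono r ∧ StrictMono c ∧
    ∀ i j, P i j = true → M (r i) (c j) = true

def Avoids {m n k l : ℕ} (M : Fin m → Fin n → Bool) (P : Fin k → Fin l → Bool) : Prop :=
  ¬ Contains M P

/-- The matrix obtained from `M` by changing the entry at `(i, j)` to 1. -/
def SetOne {m n : ℕ} (M : Fin m → Fin n → Bool) (i : Fin m) (j : Fin n) :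
    Fin m → Fin n → Bool :=
  fun i' j' => if i' = i ∧ j' = j then true else M i' j'

def ExpandableRow {m n k l : ℕ} (M : Fin m → Fin n → Bool) (P : Fin k → Fin l → Bool)
    (i : Fin m) : Prop :=
  (∀ j, M i j = false) ∧ ∀ j, Contains (SetOne M i j) P

def ExpandableCol {m n k l : ℕ} (M : Fin m → Fin n → Bool) (P : Fin k → Fin l → Bool)
    (j : Fin n) : Prop :=
  (∀ i, M i j = false) ∧ ∀ i, Contains (SetOne M i j) P

def Saturated {m n k l : ℕ} (M : Fin m → Fin n → Bool) (P : Fin k → Fin l → Bool) : Prop :=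
  Avoids M P ∧ ∀ i j, M i j = false → Contains (SetOne M i j) P

def IsWitness {m n k l : ℕ} (M : Fin m → Fin n → Bool) (P : Fin k → Fin l → Bool) : Prop :=
  Avoids M P ∧ (∃ i, ExpandableRow M P i) ∧ (∃ j, ExpandableCol M P j)

def HorizontalWitness {m n k l : ℕ} (M : Fin m → Fin n → Bool)
    (P : Fin k → Fin l → Bool) : Prop :=
  Avoids M P ∧ ∃ j, ExpandableCol M P j

def VerticalWitness {m n k l : ℕ} (M : Fin m → Fin n → Bool)
    (P : Fin k → Fin l → Bool) : Prop :=
  Avoids M P ∧ ∃ i, ExpandableRow M P i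

/-- `P` is once-separable: block form `((A,0),(0,B))` or `((0,A),(B,0))` with `A`, `B` nonzero. -/
def OnceSeparable {k l : ℕ} (P : Fin k → Fin l → Bool) : Prop :=
  ∃ a b : ℕ, a ≤ k ∧ b ≤ l ∧
    (((∀ i j, P i j = true → ((i.val < a ∧ j.val < b) ∨ (a ≤ i.val ∧ b ≤ j.val))) ∧
      (∃ i j, i.val < a ∧ j.val < b ∧ P i j = true) ∧
      (∃ i j, a ≤ i.val ∧ b ≤ j.val ∧ P i j = true)) ∨
     ((∀ i j, P i j = true → ((i.val < a ∧ b ≤ j.val) ∨ (a ≤ i.val ∧ j.val < b))) ∧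
      (∃ i j, i.val < a ∧ b ≤ j.val ∧ P i j = true) ∧
      (∃ i j, a ≤ i.val ∧ j.val < b ∧ P i j = true)))

def NoEmptyRowCol {k l : ℕ} (P : Fin k → Fin l → Bool) : Prop :=
  (∀ i, ∃ j, P i j = true) ∧ (∀ j, ∃ i, P i j = true)

def IsPermMatrix {k : ℕ} (P : Fin k → Fin k → Bool) : Prop :=
  (∀ i, ∃! j, P i j = true) ∧ (∀ j, ∃! i, P i j = true)

/-- `P` is non-trivial: it has a row whose only 1-entry is leftmost, a row whose only
1-entry is rightmost, a column whose only 1-entry is topmost, and a column whose only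
1-entry is bottommost. -/
def NonTrivial {k l : ℕ} (P : Fin k → Fin l → Bool) : Prop :=
  (∃ i, ∀ j, (P i j = true ↔ j.val = 0)) ∧
  (∃ i, ∀ j, (P i j = true ↔ j.val = l - 1)) ∧
  (∃ j, ∀ i, (P i j = true ↔ i.val = 0)) ∧
  (∃ j, ∀ i, (P i j = true ↔ i.val = k - 1))

/-- The two-copy witness construction `W(P)` (0-based indices; `s < t` are the 0-based
rows of the leftmost and rightmost 1-entries of `P`). -/
def WP {k : ℕ} (P : Fin k → Fin k → Bool) (s t : ℕ) :
    Fin (k + (t - s)) → Fin (2 * k - 2) → Bool :=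
  fun i j =>
    if h : j.val < k - 1 ∧ i.val < k then P ⟨i.val, h.2⟩ ⟨j.val, by omega⟩
    else if h2 : k - 1 ≤ j.val ∧ t - s ≤ i.val ∧ i.val - (t - s) < k ∧ j.val - (k - 2) < k then
      P ⟨i.val - (t - s), h2.2.2.1⟩ ⟨j.val - (k - 2), h2.2.2.2⟩
    else false

theorem strictMono_add_sub_le {k m : ℕ} {f : Fin k → Fin m} (hf : StrictMono f) (n : ℕ) :
    ∀ i j : Fin k, i.val + n = j.val → (f i).val + n ≤ (f j).val := by
  induction n with
  | zero =>
    intro i j h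
    have : i = j := Fin.ext (by omega)
    subst this
    omega
  | succ n ih =>
    intro i j h
    have h1 := ih i ⟨i.val + n, by omega⟩ rfl
    have h2 : f ⟨i.val + n, by omega⟩ < f j := hf (Fin.lt_def.2 (by simp only; omega))
    have h3 := Fin.lt_def.1 h2
    omega

theorem row_lt_of_WP {k : ℕ} {P : Fin k → Fin k → Bool} {s t : ℕ} {i : Fin (k + (t - s))}
    {j : Fin (2 * k - 2)} (h : WP P s t i j = true) (hj : j.val < k - 1) : i.val < k := by
  unfold WP at h
  split_ifs at h <;> omega

theorem le_row_of_WP {k : ℕ} {P : Fin k → Fin k → Bool} {s t : ℕ} {i : Fin (k + (t - s))}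
    {j : Fin (2 * k - 2)} (h : WP P s t i j = true) (hj : k - 1 ≤ j.val) : t - s ≤ i.val := by
  unfold WP at h
  split_ifs at h <;> omega

/-- If row `s` of `P` is empty outside the first column and row `t` is empty outside the last
column, then row `t` of `W(P)` is empty: both surviving 1-entries would lie in the column removed
from the respective copy. -/
theorem WP_row_eq_false {k : ℕ} {P : Fin k → Fin k → Bool} {s t : ℕ} (hst : s < t)
    (hrs : ∀ i j : Fin k, i.val = s → P i j = true → j.val = 0)
    (hrt : ∀ i j : Fin k, i.val = t → P i j = true → j.val = k - 1)
    (i : Fin (k + (t - s))) (hi : i.val = t) (j : Fin (2 * k - 2)) : ¬ WP P s t i j = true := by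
  intro h
  unfold WP at h
  split_ifs at h with h1 h2
  · have := hrt _ _ hi h
    simp only at this
    omega
  · have := hrs _ _ (by simp only; omega) h
    simp only at this
    omega

theorem stmt10 {k : ℕ} (P : Fin k → Fin k → Bool) (a b s t : ℕ)
    (hs : 0 < s) (hst : s < t) (htk : t < k - 1)
    (hb : 0 < b) (hba : b < a) (hak : a < k - 1)
    (hnt : NonTrivial P) (hP : NoEmptyRowCol P)
    (hrow0 : ∀ j : Fin k, (P ⟨0, by omega⟩ j = true ↔ j.val = a))
    (hrowlast : ∀ j : Fin k, (P ⟨k - 1, by omega⟩ j = true ↔ j.val = b))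
    (hcol0 : ∀ i : Fin k, (P i ⟨0, by omega⟩ = true ↔ i.val = s))
    (hcollast : ∀ i : Fin k, (P i ⟨k - 1, by omega⟩ = true ↔ i.val = t)) :
    Avoids (WP P s t) P := by
  rintro ⟨r, c, hr, hc, hrc⟩
  obtain ⟨⟨i₁, h₁⟩, ⟨i₂, h₂⟩, -, -⟩ := hnt
  have hrs : ∀ i j : Fin k, i.val = s → P i j = true → j.val = 0 := by
    intro i j hi hij
    have hi₁ : i₁.val = s := (hcol0 i₁).1 ((h₁ _).2 rfl)
    obtain rfl : i = i₁ := Fin.ext (by omega)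
    exact (h₁ j).1 hij
  have hrt : ∀ i j : Fin k, i.val = t → P i j = true → j.val = k - 1 := by
    intro i j hi hij
    have hi₂ : i₂.val = t := (hcollast i₂).1 ((h₂ _).2 rfl)
    obtain rfl : i = i₂ := Fin.ext (by omega)
    exact (h₂ j).1 hij
  have hne : ∀ i, (r i).val ≠ t := by
    intro i hi
    obtain ⟨j, hj⟩ := hP.1 i
    exact WP_row_eq_false hst hrs hrt (r i) hi (c j) (hrc i j hj)
  have ha : (c ⟨a, by omega⟩).val < k - 1 := by
    by_contra hcon
    have h0 := le_row_of_WP (hrc ⟨0, by omega⟩ ⟨a, by omega⟩ ((hrow0 _).2 rfl)) (by omega)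
    have hlow := strictMono_add_sub_le hr s ⟨0, by omega⟩ ⟨s, by omega⟩ (by simp)
    have hupp := strictMono_add_sub_le hr (k - 1 - s) ⟨s, by omega⟩ ⟨k - 1, by omega⟩
      (by simp only; omega)
    have hlast := (r ⟨k - 1, by omega⟩).isLt
    have := hne ⟨s, by omega⟩
    omega
  have hb' : k - 1 ≤ (c ⟨b, by omega⟩).val := by
    by_contra hcon
    have h0 := row_lt_of_WP (hrc ⟨k - 1, by omega⟩ ⟨b, by omega⟩ ((hrowlast _).2 rfl)) (by omega)
    have hlow := strictMono_add_sub_le hr t ⟨0, by omega⟩ ⟨t, by omega⟩ (by simp)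
    have hupp := strictMono_add_sub_le hr (k - 1 - t) ⟨t, by omega⟩ ⟨k - 1, by omega⟩
      (by simp only; omega)
    have := hne ⟨t, by omega⟩
    omega
  have hlt : c ⟨b, by omega⟩ < c ⟨a, by omega⟩ := hc (Fin.lt_def.2 hba)
  have := Fin.lt_def.1 hlt
  omega
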